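/- In the GJR-COGARCH method-of-moments setting (Δ, S > 0; θ, η, φ > 0; γ ∈ [0,1); γ̃ = 1 + γ²; H = γ̃² + 4γ̃ − 4; p = η − φγ̃ > 0; q = 2p − φ²HS > 0; μ = θΔ/p; E = (1 − e^{−Δp})(e^{Δp} − 1); Γ, k, M₁ as defined), the parameter φ satisfies the quadratic equation φ²γ̃M₁ + 2φpM₁ − 2kΓp³Δ/(H·E) = 0; moreover, with M₄ := p²/γ̃² + 2ΔkΓp³/(γ̃M₁EH), one has M₄ > 0, √M₄ > p/γ̃, and φ = −p/γ̃ + √M₄. -/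

import Mathlib

/-!
The first summand of `Γ` equals `(6kΓ/E)(pΔ - 1 + exp (-Δp))` and the last one equals `2μ²`, so `M₁`
is the middle summand. Its ratio to `kΓ/E` is `2p³Δ / (φ²bH)` with `b = 2η/φ - γ̃`, and
`φb = φγ̃ + 2p`, so this is the quadratic equation for `φ`. Completing the square turns `M₄` into
`(φ + p/γ̃)²`, and `φ` is the positive root.
-/

namespace GJRCOGARCH

/-- The variance `Γ` of the squared increment of the log-price over an interval of length `Δ`.
The arguments `a` and `b` stand for `2/q - 1/p` and `2η/φ - γ̃`, so that the covariances at positive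
lags are proportional to `b * a`. -/
noncomputable def sqIncrementVariance (Δ θ φ p H a b : ℝ) : ℝ :=
  6 * (θ ^ 2 / p ^ 2) * b * a * (Δ - (1 - Real.exp (-Δ * p)) / p)
    + 2 * (θ ^ 2 / φ ^ 2) * a * H⁻¹ * Δ
    + 2 * (θ ^ 2 / p ^ 2) * Δ ^ 2

section Elementary

variable {a b c x : ℝ}

theorem one_sub_exp_neg_mul_exp_sub_one_pos (hx : x ≠ 0) :
    0 < (1 - Real.exp (-x)) * (Real.exp x - 1) := by
  have hsub : Real.exp x - 1 ≠ 0 := sub_ne_zero.2 (mt (Real.exp_eq_one_iff x).1 hx)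
  calc
    0 < Real.exp (-x) * (Real.exp x - 1) ^ 2 := by positivity
    _ = (1 - Real.exp (-x)) * (Real.exp x - 1) := by
      rw [Real.exp_neg]
      field_simp

theorem one_sub_exp_neg_mul_div_le (hb : 0 < b) : (1 - Real.exp (-x * b)) / b ≤ x := by
  rw [div_le_iff₀ hb, neg_mul]
  linarith [Real.one_sub_le_exp_neg (x * b)]

theorem two_div_sub_one_div_pos (ha : 0 < a) (hab : a < 2 * b) : 0 < 2 / a - 1 / b := by
  have hb : 0 < b := by linarith
  rw [sub_pos, div_lt_div_iff₀ hb ha]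
  linarith

theorem sq_add_four_mul_sub_four_pos (ha : 1 ≤ a) : 0 < a ^ 2 + 4 * a - 4 := by
  nlinarith

theorem sqrt_eq_add_div_of_quadratic (ha : a ≠ 0) (hx : 0 ≤ x + b / a)
    (h : x ^ 2 * a + 2 * x * b = c) : √(b ^ 2 / a ^ 2 + c / a) = x + b / a := by
  have hsq : b ^ 2 / a ^ 2 + c / a = (x + b / a) ^ 2 := by
    rw [← h]
    field_simp
    ring
  rw [hsq, Real.sqrt_sq hx]

end Elementary

section Moments

variable {Δ θ η φ γt p H a b : ℝ}

theorem sqIncrementVariance_pos (hΔ : 0 < Δ) (hθ : θ ≠ 0) (hp : 0 < p) (hH : 0 ≤ H)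
    (ha : 0 ≤ a) (hb : 0 ≤ b) : 0 < sqIncrementVariance Δ θ φ p H a b := by
  have hexp : 0 ≤ Δ - (1 - Real.exp (-Δ * p)) / p := sub_nonneg.2 (one_sub_exp_neg_mul_div_le hp)
  unfold sqIncrementVariance
  positivity

theorem sqIncrementVariance_sub_cov_sub_mean_sq (hp : p ≠ 0) :
    sqIncrementVariance Δ θ φ p H a b
        - 6 * (θ ^ 2 / p ^ 3 * b * a) * (p * Δ - 1 + Real.exp (-Δ * p)) - 2 * (θ * Δ / p) ^ 2
      = 2 * (θ ^ 2 / φ ^ 2) * a * H⁻¹ * Δ := by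
  have hfactor : p * Δ - 1 + Real.exp (-Δ * p) = p * (Δ - (1 - Real.exp (-Δ * p)) / p) := by
    field_simp
    ring
  rw [hfactor, sqIncrementVariance]
  field_simp
  ring

theorem mul_two_mul_div_sub (hφ : φ ≠ 0) (hp : p = η - φ * γt) :
    φ * (2 * η / φ - γt) = φ * γt + 2 * p := by
  rw [hp]
  field_simp
  ring

theorem quadratic_mul_of_mul_eq (hφ : φ ≠ 0) (hp : p ≠ 0) (hb : φ * b = φ * γt + 2 * p) :
    (φ ^ 2 * γt + 2 * φ * p) * (2 * (θ ^ 2 / φ ^ 2) * a * H⁻¹ * Δ)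
      = 2 * (θ ^ 2 / p ^ 3 * b * a) * p ^ 3 * Δ / H := by
  have hquad : φ ^ 2 * γt + 2 * φ * p = φ ^ 2 * b := by linear_combination -φ * hb
  rw [hquad]
  field_simp

end Moments

end GJRCOGARCH

open GJRCOGARCH

theorem mom_phi_quadratic_general {Δ S θ η φ γ γt H p q μ E Γ k M₁ M₄ : ℝ}
    (hΔ : 0 < Δ) (hS : 0 < S) (hθ : θ ≠ 0) (hφ : 0 < φ)
    (hγt : γt = 1 + γ ^ 2) (hH : H = γt ^ 2 + 4 * γt - 4)
    (hp : p = η - φ * γt) (hp0 : 0 < p)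
    (hq : q = 2 * p - φ ^ 2 * H * S) (hq0 : 0 < q)
    (hμ : μ = θ * Δ / p)
    (hE : E = (1 - Real.exp (-Δ * p)) * (Real.exp (Δ * p) - 1))
    (hΓ : Γ = sqIncrementVariance Δ θ φ p H (2 / q - 1 / p) (2 * η / φ - γt))
    (hk : k = (θ ^ 2 / (Γ * p ^ 3)) * (2 * η / φ - γt) * (2 / q - 1 / p) * E)
    (hM1 : M₁ = Γ - (6 * k * Γ / E) * (p * Δ - 1 + Real.exp (-Δ * p)) - 2 * μ ^ 2)
    (hM4 : M₄ = p ^ 2 / γt ^ 2 + 2 * Δ * k * Γ * p ^ 3 / (γt * M₁ * E * H)) :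
    φ ^ 2 * γt * M₁ + 2 * φ * p * M₁ - 2 * k * Γ * p ^ 3 * Δ / (H * E) = 0 ∧
    0 < M₄ ∧ p / γt < √M₄ ∧ φ = -p / γt + √M₄ := by
  have hγt0 : 0 < γt := by rw [hγt]; positivity
  have hH0 : 0 < H := by rw [hH]; exact sq_add_four_mul_sub_four_pos (by nlinarith [sq_nonneg γ])
  have ha : 0 < 2 / q - 1 / p :=
    two_div_sub_one_div_pos hq0 (by rw [hq]; exact sub_lt_self _ (by positivity))
  have hφb := mul_two_mul_div_sub hφ.ne' hp
  have hb : 0 < 2 * η / φ - γt := pos_of_mul_pos_right (hφb ▸ by positivity) hφ.le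
  have hE0 : 0 < E := by
    simpa only [hE, neg_mul] using one_sub_exp_neg_mul_exp_sub_one_pos (mul_pos hΔ hp0).ne'
  have hΓ0 : 0 < Γ := hΓ ▸ sqIncrementVariance_pos hΔ hθ hp0 hH0.le ha.le hb.le
  generalize 2 / q - 1 / p = a at *
  generalize 2 * η / φ - γt = b at *
  have hcov : k * Γ / E = θ ^ 2 / p ^ 3 * b * a := by rw [hk]; field_simp
  have hM : M₁ = 2 * (θ ^ 2 / φ ^ 2) * a * H⁻¹ * Δ := by
    rw [hM1, mul_assoc 6, mul_div_assoc 6, hcov, hμ, hΓ,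
      sqIncrementVariance_sub_cov_sub_mean_sq hp0.ne']
  have hM0 : 0 < M₁ := by rw [hM]; positivity
  have hquad : (φ ^ 2 * γt + 2 * φ * p) * M₁ = 2 * k * Γ * p ^ 3 * Δ / (H * E) := by
    rw [hM, quadratic_mul_of_mul_eq hφ.ne' hp0.ne' hφb, ← hcov]
    ring
  have hroot : √M₄ = φ + p / γt := by
    rw [← sqrt_eq_add_div_of_quadratic hγt0.ne' (by positivity) (eq_div_of_mul_eq hM0.ne' hquad),
      hM4]
    congr 2
    ring
  have hroot_pos : 0 < √M₄ := by rw [hroot]; positivity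
  refine ⟨by linear_combination hquad, Real.sqrt_pos.1 hroot_pos, by linarith, ?_⟩
  rw [hroot]
  ring

/-- In the GJR-COGARCH method-of-moments setting, `φ` satisfies the quadratic equation
`φ²γ̃M₁ + 2φpM₁ − 2kΓp³Δ/(HE) = 0`; moreover, with
`M₄ = p²/γ̃² + 2ΔkΓp³/(γ̃M₁EH)`, one has `M₄ > 0`, `√M₄ > p/γ̃` and
`φ = −p/γ̃ + √M₄`. -/
theorem mom_phi_quadratic
    (Δ S θ η φ γ γt H p q μ E Γ k : ℝ)
    (hΔ : 0 < Δ) (hS : 0 < S) (hθ : 0 < θ) (hη : 0 < η) (hφ : 0 < φ)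
    (hγ : γ ∈ Set.Ico (0 : ℝ) 1)
    (hγt : γt = 1 + γ ^ 2) (hH : H = γt ^ 2 + 4 * γt - 4)
    (hp : p = η - φ * γt) (hp0 : 0 < p)
    (hq : q = 2 * p - φ ^ 2 * H * S) (hq0 : 0 < q)
    (hμ : μ = θ * Δ / p)
    (hE : E = (1 - Real.exp (-Δ * p)) * (Real.exp (Δ * p) - 1))
    (hΓ : Γ = 6 * (θ ^ 2 / p ^ 2) * (2 * η / φ - γt) * (2 / q - 1 / p)
            * (Δ - (1 - Real.exp (-Δ * p)) / p)
          + 2 * (θ ^ 2 / φ ^ 2) * (2 / q - 1 / p) * H⁻¹ * Δ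
          + 2 * (θ ^ 2 / p ^ 2) * Δ ^ 2)
    (hk : k = (θ ^ 2 / (Γ * p ^ 3)) * (2 * η / φ - γt) * (2 / q - 1 / p) * E)
    (M₁ M₄ : ℝ)
    (hM1 : M₁ = Γ - (6 * k * Γ / E) * (p * Δ - 1 + Real.exp (-Δ * p)) - 2 * μ ^ 2)
    (hM4 : M₄ = p ^ 2 / γt ^ 2 + 2 * Δ * k * Γ * p ^ 3 / (γt * M₁ * E * H)) :
    φ ^ 2 * γt * M₁ + 2 * φ * p * M₁ - 2 * k * Γ * p ^ 3 * Δ / (H * E) = 0 ∧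
    0 < M₄ ∧ p / γt < Real.sqrt M₄ ∧ φ = -p / γt + Real.sqrt M₄ :=
  mom_phi_quadratic_general hΔ hS hθ.ne' hφ hγt hH hp hp0 hq hq0 hμ hE hΓ hk hM1 hM4
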